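/- Let D ⊂ ℝ² be open, connected, nonempty, with D ≠ ℝ², and suppose D is a stationary set-theoretic solution of -κ - 1 = 0 on ∂D, i.e., the constant-in-time family D_t = D is a set-theoretic solution of the surface evolution V = κ + 1: the upper semicontinuous function (x,t) ↦ 𝟙_{cl(D)}(x) is a viscosity subsolution, and the lower semicontinuous function (x,t) ↦ 𝟙_D(x) is a viscosity supersolution, of u_t - (div(Du/|Du|)+1)|Du| = 0 in ℝ² × (0,∞). Then D is an open unit disk, i.e., there exists z ∈ ℝ² such that D = B(z,1). -/

import Mathlib

open Set Filter Topology
open scoped RealInnerProductSpace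

noncomputable section

/-- The trace of a continuous linear endomorphism of `ℝⁿ`. -/
def clmTrace {n : ℕ} (A : EuclideanSpace ℝ (Fin n) →L[ℝ] EuclideanSpace ℝ (Fin n)) : ℝ :=
  LinearMap.trace ℝ (EuclideanSpace ℝ (Fin n)) A.toLinearMap

/-- The (spatial) Hessian of `φ : ℝⁿ → ℝ` at `x`, as the derivative of the gradient. -/
def hess {n : ℕ} (φ : EuclideanSpace ℝ (Fin n) → ℝ) (x : EuclideanSpace ℝ (Fin n)) :
    EuclideanSpace ℝ (Fin n) →L[ℝ] EuclideanSpace ℝ (Fin n) :=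
  fderiv ℝ (gradient φ) x

/-- `tr((I - η⊗η) D²φ(x))` for a continuous linear map `A = D²φ(x)` and `η ∈ ℝⁿ`. -/
def trProj {n : ℕ} (A : EuclideanSpace ℝ (Fin n) →L[ℝ] EuclideanSpace ℝ (Fin n))
    (η : EuclideanSpace ℝ (Fin n)) : ℝ :=
  clmTrace A - ⟪A η, η⟫

/-- `v` is a viscosity subsolution of the stationary level-set equation
`-(div(Dv/|Dv|)+1)|Dv| = g(x)` on the open set `O ⊆ ℝⁿ`.  When the gradient of
the test function does not vanish one uses `η = Dφ/|Dφ|`, noting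
`div(Dφ/|Dφ|)·|Dφ| = tr((I - η⊗η) D²φ)`; when it vanishes, some `η` with `|η| ≤ 1`. -/
def StatSubsol {n : ℕ} (g : EuclideanSpace ℝ (Fin n) → ℝ) (O : Set (EuclideanSpace ℝ (Fin n)))
    (v : EuclideanSpace ℝ (Fin n) → ℝ) : Prop :=
  ∀ φ : EuclideanSpace ℝ (Fin n) → ℝ, ContDiff ℝ 2 φ →
    ∀ x₀ ∈ O, IsLocalMax (fun x => v x - φ x) x₀ →
      (gradient φ x₀ ≠ 0 →
        -(trProj (hess φ x₀) (‖gradient φ x₀‖⁻¹ • gradient φ x₀) + ‖gradient φ x₀‖) ≤ g x₀) ∧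
      (gradient φ x₀ = 0 →
        ∃ η : EuclideanSpace ℝ (Fin n), ‖η‖ ≤ 1 ∧ -(trProj (hess φ x₀) η) ≤ g x₀)

/-- Viscosity supersolution of the stationary level-set equation
`-(div(Dv/|Dv|)+1)|Dv| = g(x)` on the open set `O ⊆ ℝⁿ`. -/
def StatSupersol {n : ℕ} (g : EuclideanSpace ℝ (Fin n) → ℝ) (O : Set (EuclideanSpace ℝ (Fin n)))
    (v : EuclideanSpace ℝ (Fin n) → ℝ) : Prop :=
  ∀ φ : EuclideanSpace ℝ (Fin n) → ℝ, ContDiff ℝ 2 φ →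
    ∀ x₀ ∈ O, IsLocalMin (fun x => v x - φ x) x₀ →
      (gradient φ x₀ ≠ 0 →
        -(trProj (hess φ x₀) (‖gradient φ x₀‖⁻¹ • gradient φ x₀) + ‖gradient φ x₀‖) ≥ g x₀) ∧
      (gradient φ x₀ = 0 →
        ∃ η : EuclideanSpace ℝ (Fin n), ‖η‖ ≤ 1 ∧ -(trProj (hess φ x₀) η) ≥ g x₀)

/-- Spatial gradient of a space-time test function. -/
def sGrad {n : ℕ} (φ : EuclideanSpace ℝ (Fin n) → ℝ → ℝ) (x : EuclideanSpace ℝ (Fin n))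
    (t : ℝ) : EuclideanSpace ℝ (Fin n) :=
  gradient (fun y => φ y t) x

/-- Spatial Hessian of a space-time test function. -/
def sHess {n : ℕ} (φ : EuclideanSpace ℝ (Fin n) → ℝ → ℝ) (x : EuclideanSpace ℝ (Fin n))
    (t : ℝ) : EuclideanSpace ℝ (Fin n) →L[ℝ] EuclideanSpace ℝ (Fin n) :=
  fderiv ℝ (fun y => gradient (fun z => φ z t) y) x

/-- Time derivative of a space-time test function. -/
def tDeriv {n : ℕ} (φ : EuclideanSpace ℝ (Fin n) → ℝ → ℝ) (x : EuclideanSpace ℝ (Fin n))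
    (t : ℝ) : ℝ :=
  deriv (fun s => φ x s) t

/-- `u` is a viscosity subsolution of the level-set equation
`u_t - (div(Du/|Du|)+1)|Du| = f(x)` in `O × (0,∞)`: at any local maximum `(x₀,t₀)`,
`t₀ > 0`, `x₀ ∈ O`, of `u - φ` with `φ` C², the subsolution inequality holds, where
`(div(D_xφ/|D_xφ|)+1)|D_xφ| = tr((I - η⊗η) D_x²φ) + |D_xφ|` with `η = D_xφ/|D_xφ|`
if `D_xφ ≠ 0`, and with some `η`, `|η| ≤ 1`, and no `|D_xφ|` term if `D_xφ = 0`. -/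
def ParabSubsol {n : ℕ} (f : EuclideanSpace ℝ (Fin n) → ℝ) (O : Set (EuclideanSpace ℝ (Fin n)))
    (u : EuclideanSpace ℝ (Fin n) → ℝ → ℝ) : Prop :=
  ∀ φ : EuclideanSpace ℝ (Fin n) → ℝ → ℝ,
    ContDiff ℝ 2 (fun p : EuclideanSpace ℝ (Fin n) × ℝ => φ p.1 p.2) →
    ∀ x₀ ∈ O, ∀ t₀ : ℝ, 0 < t₀ →
      IsLocalMax (fun p : EuclideanSpace ℝ (Fin n) × ℝ => u p.1 p.2 - φ p.1 p.2) (x₀, t₀) →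
        (sGrad φ x₀ t₀ ≠ 0 →
          tDeriv φ x₀ t₀ -
            (trProj (sHess φ x₀ t₀) (‖sGrad φ x₀ t₀‖⁻¹ • sGrad φ x₀ t₀) + ‖sGrad φ x₀ t₀‖)
            ≤ f x₀) ∧
        (sGrad φ x₀ t₀ = 0 →
          ∃ η : EuclideanSpace ℝ (Fin n), ‖η‖ ≤ 1 ∧
            tDeriv φ x₀ t₀ - trProj (sHess φ x₀ t₀) η ≤ f x₀)

/-- Viscosity supersolution of the level-set equation
`u_t - (div(Du/|Du|)+1)|Du| = f(x)` in `O × (0,∞)`. -/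
def ParabSupersol {n : ℕ} (f : EuclideanSpace ℝ (Fin n) → ℝ) (O : Set (EuclideanSpace ℝ (Fin n)))
    (u : EuclideanSpace ℝ (Fin n) → ℝ → ℝ) : Prop :=
  ∀ φ : EuclideanSpace ℝ (Fin n) → ℝ → ℝ,
    ContDiff ℝ 2 (fun p : EuclideanSpace ℝ (Fin n) × ℝ => φ p.1 p.2) →
    ∀ x₀ ∈ O, ∀ t₀ : ℝ, 0 < t₀ →
      IsLocalMin (fun p : EuclideanSpace ℝ (Fin n) × ℝ => u p.1 p.2 - φ p.1 p.2) (x₀, t₀) →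
        (sGrad φ x₀ t₀ ≠ 0 →
          tDeriv φ x₀ t₀ -
            (trProj (sHess φ x₀ t₀) (‖sGrad φ x₀ t₀‖⁻¹ • sGrad φ x₀ t₀) + ‖sGrad φ x₀ t₀‖)
            ≥ f x₀) ∧
        (sGrad φ x₀ t₀ = 0 →
          ∃ η : EuclideanSpace ℝ (Fin n), ‖η‖ ≤ 1 ∧
            tDeriv φ x₀ t₀ - trProj (sHess φ x₀ t₀) η ≥ f x₀)

end

/-!
Testing the equation with the paraboloids `-‖y - z‖ ^ 2` shows that a disk contained in `D` near a
point of `∂D` on its boundary circle has radius at most `1`, and that a disk containing `closure D`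
near such a point has radius at least `1`.

Let `x ∉ D` see a segment `[a, b] ⊆ D` under an obtuse angle. Among the circular arcs over `[a, b]`
on the side of `x`, the flattest one that meets the complement of `D` touches `∂D` from inside, so
its radius is at most `1`. The angle at `x` is no larger than the inscribed angle of this arc, hence
the circumradius of `a b x` is at most `1` as well. In particular such triangles cannot degenerate:
for `a ∈ D` the open set of `b` with `[a, b] ⊆ D` is relatively closed in `D`, so `D` is convex.
Now let `u` be the inner normal of a supporting line at `y ∈ ∂D`, and let `p ∈ D`. If `b ∈ D` tends
to `y`, and then `x` tends to `y` along this line, the circumradius bound for `p b x` becomes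
`‖p - y‖ ^ 2 ≤ 2 * ⟪u, p - y⟫`, that is, `p` lies in the closed unit disk centred at `y + u`.

So every point outside `D` is also outside some unit disk containing `D`. There is only one such
disk: if there were two, `D` would lie in a smaller disk about the midpoint of their centres, and
shrinking it until it touches `∂D` would contradict the lower bound on the radius. Hence `D` is that
disk.
-/

section Touching

variable {E : Type*} [PseudoMetricSpace E]

/-- A ball whose bounding sphere passes through a point `x ∉ D`, and whose interior lies in `D`
near `x`, has radius at most `r`. For a smooth planar domain this says that the curvature of the
boundary is at least `1 / r`. -/
def InnerTouchingRadiusLE (D : Set E) (r : ℝ) : Prop :=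
  ∀ z, ∀ x ∉ D, IsLocalMinOn (dist · z) Dᶜ x → dist x z ≤ r

/-- A closed ball which contains `C` near a point `x ∈ C` of its bounding sphere has radius at
least `r`. For a smooth planar domain this says that the curvature of the boundary is at most
`1 / r`. -/
def OuterTouchingRadiusGE (C : Set E) (r : ℝ) : Prop :=
  ∀ z, ∀ x ∈ C, IsLocalMaxOn (dist · z) C x → r ≤ dist x z

end Touching

section EnclosingBall

variable {E : Type*} [NormedAddCommGroup E] [NormedSpace ℝ E] [StrictConvexSpace ℝ E]
  [ProperSpace E] {D : Set E} {r : ℝ} {z₁ z₂ : E}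

lemma OuterTouchingRadiusGE.eq_of_subset_closedBall (hD : OuterTouchingRadiusGE (closure D) r)
    (hne : D.Nonempty) (h₁ : D ⊆ Metric.closedBall z₁ r) (h₂ : D ⊆ Metric.closedBall z₂ r) :
    z₁ = z₂ := by
  by_contra hz
  have hcpt : IsCompact (closure D) := (Metric.isBounded_closedBall.subset h₁).isCompact_closure
  obtain ⟨x, hx, hmax⟩ := hcpt.exists_isMaxOn hne.closure
    (f := (dist · (midpoint ℝ z₁ z₂))) (by fun_prop)
  have hge : r ≤ dist x (midpoint ℝ z₁ z₂) := hD _ x hx hmax.localize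
  have hcenter (z : E) (h : D ⊆ Metric.closedBall z r) : z ∈ Metric.closedBall x r :=
    Metric.mem_closedBall_comm.1 (closure_minimal h Metric.isClosed_closedBall hx)
  have hmid : midpoint ℝ z₁ z₂ ∈ interior (Metric.closedBall x r) :=
    (strictConvex_closedBall ℝ x r).openSegment_subset (hcenter z₁ h₁) (hcenter z₂ h₂) hz
      (midpoint_mem_openSegment z₁ z₂)
  have : Nontrivial E := ⟨z₁, z₂, hz⟩
  rw [interior_closedBall', Metric.mem_ball'] at hmid
  exact hge.not_gt hmid

end EnclosingBall

section Segment

variable {E : Type*} [AddCommGroup E] [Module ℝ E] [TopologicalSpace E] [ContinuousAdd E]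
  [ContinuousSMul ℝ E] {D : Set E}

lemma isOpen_setOf_segment_subset (hD : IsOpen D) (a : E) : IsOpen {b | segment ℝ a b ⊆ D} := by
  have hline : Continuous fun p : E × ℝ => (1 - p.2) • a + p.2 • p.1 := by fun_prop
  simp only [segment_eq_image, image_subset_iff]
  refine isOpen_iff_eventually.2 fun b hb => ?_
  exact isCompact_Icc.eventually_forall_of_forall_eventually fun t ht =>
    hline.continuousAt.eventually (hD.mem_nhds (hb ht))

end Segment

section SupportingHyperplane

variable {E : Type*} [NormedAddCommGroup E] [InnerProductSpace ℝ E] {D : Set E} {y : E}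

lemma exists_norm_eq_one_forall_inner_pos [CompleteSpace E] (hconv : Convex ℝ D) (hD : IsOpen D)
    (hne : D.Nonempty) (hy : y ∉ D) : ∃ u : E, ‖u‖ = 1 ∧ ∀ p ∈ D, 0 < ⟪u, p - y⟫ := by
  obtain ⟨f, hf⟩ := geometric_hahn_banach_point_open hconv hD hy
  set w : E := (InnerProductSpace.toDual ℝ E).symm f
  have hw : ∀ p ∈ D, 0 < ⟪w, p - y⟫ := fun p hp => by
    rw [InnerProductSpace.toDual_symm_apply, map_sub]
    exact sub_pos.2 (hf p hp)
  have hw0 : w ≠ 0 := by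
    obtain ⟨p, hp⟩ := hne
    intro h
    simpa [h] using hw p hp
  refine ⟨‖w‖⁻¹ • w, norm_smul_inv_norm hw0, fun p hp => ?_⟩
  rw [real_inner_smul_left]
  exact mul_pos (inv_pos.2 (norm_pos_iff.2 hw0)) (hw p hp)

lemma dense_setOf_inner_sub_ne_zero {v : E} (hv : v ≠ 0) (y : E) :
    Dense {p | ⟪v, p - y⟫ ≠ 0} := by
  have hopen : IsOpenMap (innerSL ℝ v) :=
    ContinuousLinearMap.isOpenMap_of_ne_zero _ fun h => hv (by simpa using DFunLike.congr_fun h v)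
  simpa [inner_sub_right, sub_eq_zero, ofPred_eq_eq_singleton, compl_def] using
    (dense_compl_singleton ⟪v, y⟫).preimage hopen

end SupportingHyperplane

section Plane

open Module Orientation

attribute [local instance] FiniteDimensional.of_fact_finrank_eq_two

variable {E : Type*} [NormedAddCommGroup E] [InnerProductSpace ℝ E] [Fact (finrank ℝ E = 2)]
  (o : Orientation ℝ E (Fin 2)) {D : Set E} {r : ℝ} {a b x y : E}

lemma continuous_areaForm {X : Type*} [TopologicalSpace X] {f g : X → E} (hf : Continuous f)
    (hg : Continuous g) : Continuous fun t => o.areaForm (f t) (g t) := by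
  simp only [← o.inner_rightAngleRotation_left]
  fun_prop

lemma mem_segment_iff_inner_nonpos_and_areaForm_eq_zero :
    x ∈ segment ℝ a b ↔ ⟪a - x, b - x⟫ ≤ 0 ∧ o.areaForm (a - x) (b - x) = 0 := by
  rw [mem_segment_iff_sameRay, ← o.nonneg_inner_and_areaForm_eq_zero_iff_sameRay,
    ← neg_sub a x, inner_neg_left, map_neg, LinearMap.neg_apply, neg_nonneg, neg_eq_zero]

/-- The centre of the circle `{x | ⟪a - x, b - x⟫ + c * o.areaForm (a - x) (b - x) = 0}` through
`a` and `b`. By the inscribed angle theorem, the cotangent of the oriented angle from `a - x` to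
`b - x` is `-c` all along this circle; `c = 0` is the circle with diameter `[a, b]`. -/
noncomputable def arcCenter (a b : E) (c : ℝ) : E :=
  midpoint ℝ a b - (c / 2) • o.rightAngleRotation (b - a)

lemma dist_arcCenter_sq (a b x : E) (c : ℝ) :
    dist x (arcCenter o a b c) ^ 2 = (1 + c ^ 2) * (dist a b / 2) ^ 2 +
      (⟪a - x, b - x⟫ + c * o.areaForm (a - x) (b - x)) := by
  set p := a - x with hp
  set q := b - x with hq
  have hcenter : arcCenter o a b c - x =
      (2⁻¹ : ℝ) • (p + q) - (c / 2) • o.rightAngleRotation (q - p) := by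
    rw [arcCenter, midpoint_eq_smul_add, invOf_eq_inv, hp, hq, sub_sub_sub_cancel_right]
    module
  have hsides : p - q = a - b := sub_sub_sub_cancel_right a b x
  have hcross : o.areaForm (p + q) (q - p) = 2 * o.areaForm p q := by
    simp only [map_add, map_sub, LinearMap.add_apply, o.areaForm_apply_self, o.areaForm_swap q p]
    ring
  rw [dist_comm, dist_eq_norm, dist_eq_norm, hcenter, ← hsides, norm_sub_sq_real (2⁻¹ • (p + q)),
    norm_smul, norm_smul, LinearIsometryEquiv.norm_map, norm_sub_rev q p, real_inner_smul_left,
    real_inner_smul_right, o.inner_rightAngleRotation_right, hcross, mul_pow, mul_pow,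
    norm_add_sq_real, Real.norm_eq_abs, sq_abs, Real.norm_eq_abs, sq_abs]
  linear_combination (-1 / 4) * norm_sub_sq_real p q

/-- The triangle with vertices `a`, `b`, `x` has circumradius at most `r`: the product of the side
lengths is `4` times the area times the circumradius, and `|o.areaForm (a - x) (b - x)|` is twice
the area. A degenerate triangle with distinct vertices does not satisfy this, whatever `r` is. -/
def CircumradiusLE (a b x : E) (r : ℝ) : Prop :=
  ‖a - b‖ * (‖a - x‖ * ‖b - x‖) ≤ 2 * r * |o.areaForm (a - x) (b - x)|

lemma CircumradiusLE.symm (h : CircumradiusLE o b a x r) : CircumradiusLE o a b x r := by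
  rwa [CircumradiusLE, norm_sub_rev, mul_comm ‖a - x‖, o.areaForm_swap, abs_neg]

lemma isClosed_setOf_circumradiusLE (a x : E) (r : ℝ) :
    IsClosed {b | CircumradiusLE o a b x r} := by
  have hω : Continuous fun b => o.areaForm (a - x) (b - x) :=
    continuous_areaForm o (by fun_prop) (by fun_prop)
  exact isClosed_le (by fun_prop) (by fun_prop)

-- Among the arcs over `[a, b]` on the side of `x`, take the flattest one that meets the complement
-- of `D`: it maximises the cotangent `c` of the supplement of the inscribed angle.
lemma exists_isLocalMinOn_dist_arcCenter (hD : IsOpen D) (hab : segment ℝ a b ⊆ D) (hx : x ∉ D)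
    (hobtuse : ⟪a - x, b - x⟫ < 0) (hω : 0 ≤ o.areaForm (a - x) (b - x)) :
    ∃ c, ∃ y ∉ D, IsLocalMinOn (dist · (arcCenter o a b c)) Dᶜ y ∧
      ⟪a - y, b - y⟫ + c * o.areaForm (a - y) (b - y) = 0 ∧
      -⟪a - x, b - x⟫ ≤ c * o.areaForm (a - x) (b - x) := by
  have hcω : Continuous fun y => o.areaForm (a - y) (b - y) :=
    continuous_areaForm o (by fun_prop) (by fun_prop)
  have hci : Continuous fun y => ⟪a - y, b - y⟫ := by fun_prop
  set K : Set E := Dᶜ ∩ {y | ⟪a - y, b - y⟫ ≤ 0 ∧ 0 ≤ o.areaForm (a - y) (b - y)}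
  have hKclosed : IsClosed K := hD.isClosed_compl.inter
    ((isClosed_le hci continuous_const).inter (isClosed_le continuous_const hcω))
  have hKball : K ⊆ Metric.closedBall (arcCenter o a b 0) (dist a b / 2) := fun y hy => by
    have hsq : dist y (arcCenter o a b 0) ^ 2 ≤ (dist a b / 2) ^ 2 := by
      linarith [dist_arcCenter_sq o a b y 0, hy.2.1]
    exact le_of_sq_le_sq hsq (by positivity)
  have hKcpt : IsCompact K := (isCompact_closedBall _ _).of_isClosed_subset hKclosed hKball
  have hωpos : ∀ y ∈ K, 0 < o.areaForm (a - y) (b - y) := fun y hy =>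
    hy.2.2.lt_of_ne' fun h =>
      hy.1 (hab ((mem_segment_iff_inner_nonpos_and_areaForm_eq_zero o).2 ⟨hy.2.1, h⟩))
  have hxK : x ∈ K := ⟨hx, hobtuse.le, hω⟩
  obtain ⟨y, hy, hmax⟩ := hKcpt.exists_isMaxOn ⟨x, hxK⟩
    (f := fun y => -⟪a - y, b - y⟫ / o.areaForm (a - y) (b - y))
    (hci.neg.continuousOn.div hcω.continuousOn fun y hy => (hωpos y hy).ne')
  set c := -⟪a - y, b - y⟫ / o.areaForm (a - y) (b - y)
  have hcle : ∀ w ∈ K, -⟪a - w, b - w⟫ ≤ c * o.areaForm (a - w) (b - w) := fun w hw =>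
    (div_le_iff₀ (hωpos w hw)).1 (hmax hw)
  have hcy : -⟪a - y, b - y⟫ = c * o.areaForm (a - y) (b - y) :=
    (div_mul_cancel₀ _ (hωpos y hy).ne').symm
  have hcpos : 0 < c := pos_of_mul_pos_left ((neg_pos.2 hobtuse).trans_le (hcle x hxK)) hω
  have hyobtuse : ⟪a - y, b - y⟫ < 0 := by
    have := mul_pos hcpos (hωpos y hy)
    linarith
  refine ⟨c, y, hy.1, ?_, by linarith, hcle x hxK⟩
  filter_upwards [self_mem_nhdsWithin,
    nhdsWithin_le_nhds (hci.continuousAt.eventually (gt_mem_nhds hyobtuse)),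
    nhdsWithin_le_nhds (hcω.continuousAt.eventually (lt_mem_nhds (hωpos y hy)))] with w hwD hwi hwω
  have hw := hcle w ⟨hwD, hwi.le, hwω.le⟩
  exact le_of_sq_le_sq
    (by linarith [dist_arcCenter_sq o a b y c, dist_arcCenter_sq o a b w c]) dist_nonneg

lemma InnerTouchingRadiusLE.circumradiusLE_of_areaForm_nonneg (hκ : InnerTouchingRadiusLE D r)
    (hD : IsOpen D) (hab : segment ℝ a b ⊆ D) (hx : x ∉ D) (hobtuse : ⟪a - x, b - x⟫ < 0)
    (hω : 0 ≤ o.areaForm (a - x) (b - x)) : CircumradiusLE o a b x r := by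
  obtain ⟨c, y, hyD, hmin, hyarc, hxc⟩ :=
    exists_isLocalMinOn_dist_arcCenter o hD hab hx hobtuse hω
  have hradius : dist y (arcCenter o a b c) ≤ r := hκ _ y hyD hmin
  have hr : 0 ≤ r := dist_nonneg.trans hradius
  have harc : (1 + c ^ 2) * (‖a - b‖ / 2) ^ 2 ≤ r ^ 2 := by
    rw [← dist_eq_norm, ← add_zero (_ * _), ← hyarc, ← dist_arcCenter_sq]
    gcongr
  have hinner : ⟪a - x, b - x⟫ ^ 2 ≤ c ^ 2 * o.areaForm (a - x) (b - x) ^ 2 := by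
    rw [← neg_sq, ← mul_pow]
    exact pow_le_pow_left₀ (neg_pos.2 hobtuse).le hxc 2
  rw [CircumradiusLE, abs_of_nonneg hω]
  refine le_of_sq_le_sq ?_ (by positivity)
  calc (‖a - b‖ * (‖a - x‖ * ‖b - x‖)) ^ 2
      = ‖a - b‖ ^ 2 * (⟪a - x, b - x⟫ ^ 2 + o.areaForm (a - x) (b - x) ^ 2) := by
        rw [o.inner_sq_add_areaForm_sq]
        ring
    _ ≤ ‖a - b‖ ^ 2 *
        (c ^ 2 * o.areaForm (a - x) (b - x) ^ 2 + o.areaForm (a - x) (b - x) ^ 2) := by gcongr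
    _ = 4 * ((1 + c ^ 2) * (‖a - b‖ / 2) ^ 2) * o.areaForm (a - x) (b - x) ^ 2 := by ring
    _ ≤ 4 * r ^ 2 * o.areaForm (a - x) (b - x) ^ 2 := by gcongr
    _ = (2 * r * o.areaForm (a - x) (b - x)) ^ 2 := by ring

lemma InnerTouchingRadiusLE.circumradiusLE (hκ : InnerTouchingRadiusLE D r) (hD : IsOpen D)
    (hab : segment ℝ a b ⊆ D) (hx : x ∉ D) (hobtuse : ⟪a - x, b - x⟫ < 0) :
    CircumradiusLE o a b x r := by
  rcases le_total 0 (o.areaForm (a - x) (b - x)) with hω | hω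
  · exact hκ.circumradiusLE_of_areaForm_nonneg o hD hab hx hobtuse hω
  · refine CircumradiusLE.symm o (hκ.circumradiusLE_of_areaForm_nonneg o hD ?_ hx ?_ ?_)
    · rwa [segment_symm]
    · rwa [real_inner_comm]
    · rw [o.areaForm_swap]
      exact neg_nonneg.2 hω

lemma InnerTouchingRadiusLE.circumradiusLE_of_mem_closure (hκ : InnerTouchingRadiusLE D r)
    (hD : IsOpen D) (hb : b ∈ closure {b | segment ℝ a b ⊆ D}) (hx : x ∉ D)
    (hobtuse : ⟪a - x, b - x⟫ < 0) : CircumradiusLE o a b x r := by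
  have hobtuse' : ∀ᶠ b' in 𝓝 b, ⟪a - x, b' - x⟫ < 0 :=
    (by fun_prop : Continuous fun b' => ⟪a - x, b' - x⟫).continuousAt.eventually
      (gt_mem_nhds hobtuse)
  refine (isClosed_setOf_circumradiusLE o a x r).closure_subset (mem_closure_iff_frequently.2 ?_)
  exact ((mem_closure_iff_frequently.1 hb).and_eventually hobtuse').mono fun b' hb' =>
    hκ.circumradiusLE o hD hb'.1 hx hb'.2

theorem InnerTouchingRadiusLE.convex (hκ : InnerTouchingRadiusLE D r) (hD : IsOpen D)
    (hconn : IsPreconnected D) : Convex ℝ D := by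
  let o : Orientation ℝ E (Fin 2) := (finBasisOfFinrankEq ℝ E Fact.out).orientation
  refine convex_iff_segment_subset.2 fun a ha => ?_
  refine hconn.subset_of_closure_inter_subset (isOpen_setOf_segment_subset hD a)
    ⟨a, ha, (segment_same ℝ a).trans_subset (singleton_subset_iff.2 ha)⟩ ?_
  rintro b ⟨hb, hbD⟩ x hx
  by_contra hxD
  have hax : 0 < ‖a - x‖ := norm_sub_pos_iff.2 (ne_of_mem_of_not_mem ha hxD)
  have hbx : 0 < ‖b - x‖ := norm_sub_pos_iff.2 (ne_of_mem_of_not_mem hbD hxD)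
  have hab : 0 < ‖a - b‖ := norm_sub_pos_iff.2 fun h => by
    rw [h, segment_same] at hx
    exact hxD (hx ▸ hbD)
  obtain ⟨hinner, hω⟩ := (mem_segment_iff_inner_nonpos_and_areaForm_eq_zero o).1 hx
  have hobtuse : ⟪a - x, b - x⟫ < 0 := hinner.lt_of_ne fun h => by
    have := o.inner_sq_add_areaForm_sq (a - x) (b - x)
    rw [h, hω] at this
    nlinarith [mul_pos hax hbx]
  have hcirc := hκ.circumradiusLE_of_mem_closure o hD hb hxD hobtuse
  rw [CircumradiusLE, hω, abs_zero, mul_zero] at hcirc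
  exact hcirc.not_gt (by positivity)

lemma CircumradiusLE.norm_mul_norm_le {p u : E} {s : ℝ} (hu : ‖u‖ = 1) (hs : s ≠ 0)
    (h : CircumradiusLE o p y (y + s • o.rightAngleRotation u) r) :
    ‖p - y‖ * ‖p - (y + s • o.rightAngleRotation u)‖ ≤ 2 * r * |⟪u, p - y⟫| := by
  set x := y + s • o.rightAngleRotation u with hx
  have hyx : y - x = -(s • o.rightAngleRotation u) := by rw [hx, sub_add_cancel_left]
  have hω : o.areaForm (p - x) (y - x) = -(s * ⟪u, p - y⟫) := by
    rw [← sub_add_sub_cancel p y x, map_add, LinearMap.add_apply, o.areaForm_apply_self, add_zero,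
      hyx, map_neg, map_smul, o.areaForm_rightAngleRotation_right, smul_eq_mul, real_inner_comm]
  have hnorm : ‖y - x‖ = |s| := by
    rw [hyx, norm_neg, norm_smul, LinearIsometryEquiv.norm_map, hu, mul_one, Real.norm_eq_abs]
  rw [CircumradiusLE, hω, hnorm, abs_neg, abs_mul] at h
  exact le_of_mul_le_mul_right (by linarith) (abs_pos.2 hs)

-- The limit, as two vertices merge, of the circumradius bound: the tangent-chord angle theorem.
lemma InnerTouchingRadiusLE.norm_sub_sq_le {p u : E} (hκ : InnerTouchingRadiusLE D r)
    (hD : IsOpen D) (hconv : Convex ℝ D) (hy : y ∈ closure D) (hu : ‖u‖ = 1)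
    (hpos : ∀ q ∈ D, 0 < ⟪u, q - y⟫) (hp : p ∈ D)
    (hne : ⟪o.rightAngleRotation u, p - y⟫ ≠ 0) :
    ‖p - y‖ ^ 2 ≤ 2 * r * ⟪u, p - y⟫ := by
  set β := ⟪o.rightAngleRotation u, p - y⟫ with hβ
  let x (t : ℝ) : E := y + (t * β) • o.rightAngleRotation u
  have hxD (t : ℝ) : x t ∉ D := fun hx => (hpos _ hx).ne' <| by
    simp [x, real_inner_smul_right, o.areaForm_apply_self]
  have hvisible : y ∈ closure {b | segment ℝ p b ⊆ D} :=
    closure_mono (fun b hb => hconv.segment_subset hp hb) hy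
  have hbound : ∀ t ∈ Ioo (0 : ℝ) 1, ‖p - y‖ * ‖p - x t‖ ≤ 2 * r * ⟪u, p - y⟫ := fun t ht => by
    have hobtuse : ⟪p - x t, y - x t⟫ < 0 := by
      have : ⟪p - x t, y - x t⟫ = -(t * (1 - t) * β ^ 2) := by
        have hpx : p - x t = (p - y) - (t * β) • o.rightAngleRotation u := (sub_sub _ _ _).symm
        have hyx : y - x t = -((t * β) • o.rightAngleRotation u) := sub_add_cancel_left _ _
        rw [hpx, hyx, inner_neg_right, real_inner_smul_right, inner_sub_left, real_inner_smul_left,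
          real_inner_comm, ← hβ, real_inner_self_eq_norm_sq, LinearIsometryEquiv.norm_map, hu]
        ring
      have := mul_pos (mul_pos ht.1 (sub_pos.2 ht.2)) (sq_pos_of_ne_zero hne)
      linarith
    rw [← abs_of_pos (hpos p hp)]
    exact (hκ.circumradiusLE_of_mem_closure o hD hvisible (hxD t) hobtuse).norm_mul_norm_le o hu
      (mul_ne_zero ht.1.ne' hne)
  have hlim : Tendsto (fun t => ‖p - y‖ * ‖p - x t‖) (𝓝[>] 0) (𝓝 (‖p - y‖ * ‖p - x 0‖)) :=
    (by fun_prop : Continuous fun t => ‖p - y‖ * ‖p - x t‖).continuousWithinAt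
  have h0 : x 0 = y := by simp [x]
  rw [h0, ← sq] at hlim
  exact le_of_tendsto hlim (eventually_of_mem (Ioo_mem_nhdsGT one_pos) hbound)

lemma InnerTouchingRadiusLE.exists_subset_ball_of_mem_closure (hκ : InnerTouchingRadiusLE D r)
    (hD : IsOpen D) (hconv : Convex ℝ D) (hr : 0 < r) (hy : y ∈ closure D) (hyD : y ∉ D) :
    ∃ z, D ⊆ Metric.ball z r ∧ y ∉ Metric.ball z r := by
  let o : Orientation ℝ E (Fin 2) := (finBasisOfFinrankEq ℝ E Fact.out).orientation
  obtain ⟨u, hu, hpos⟩ :=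
    exists_norm_eq_one_forall_inner_pos hconv hD (closure_nonempty_iff.1 ⟨y, hy⟩) hyD
  have hdense : Dense {p | ⟪o.rightAngleRotation u, p - y⟫ ≠ 0} :=
    dense_setOf_inner_sub_ne_zero (norm_ne_zero_iff.1 (by simp [hu])) y
  have hclosedBall : D ∩ {p | ⟪o.rightAngleRotation u, p - y⟫ ≠ 0} ⊆
      Metric.closedBall (y + r • u) r := fun p ⟨hp, hne⟩ => by
    have hchord := hκ.norm_sub_sq_le o hD hconv hy hu hpos hp hne
    rw [mem_closedBall_iff_norm]
    refine le_of_sq_le_sq ?_ hr.le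
    rw [← sub_sub, norm_sub_sq_real, norm_smul, hu, real_inner_smul_right, real_inner_comm,
      mul_one, Real.norm_eq_abs, sq_abs]
    linarith
  refine ⟨y + r • u, ?_, by simp [norm_smul, hu, abs_of_pos hr]⟩
  rw [← interior_closedBall _ hr.ne']
  exact interior_maximal ((hdense.open_subset_closure_inter hD).trans
    (closure_minimal hclosedBall Metric.isClosed_closedBall)) hD

theorem InnerTouchingRadiusLE.exists_subset_ball (hκ : InnerTouchingRadiusLE D r)
    (hD : IsOpen D) (hconn : IsConnected D) (hr : 0 < r) (hx : x ∉ D) :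
    ∃ z, D ⊆ Metric.ball z r ∧ x ∉ Metric.ball z r := by
  obtain ⟨p, hp⟩ := hconn.nonempty
  have hseg : IsPreconnected (segment ℝ p x) := (convex_segment p x).isPreconnected
  obtain ⟨y, ⟨hy, hyseg⟩, hyD⟩ := not_subset.1 <|
    mt (hseg.subset_of_closure_inter_subset hD ⟨p, left_mem_segment ℝ p x, hp⟩)
      fun h => hx (h (right_mem_segment ℝ p x))
  obtain ⟨z, hz, hyz⟩ :=
    hκ.exists_subset_ball_of_mem_closure hD (hκ.convex hD hconn.isPreconnected) hr hy hyD
  exact ⟨z, hz, fun hxz => hyz ((convex_ball z r).segment_subset (hz hp) hxz hyseg)⟩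

theorem InnerTouchingRadiusLE.exists_eq_ball (hin : InnerTouchingRadiusLE D r)
    (hout : OuterTouchingRadiusGE (closure D) r) (hD : IsOpen D) (hconn : IsConnected D)
    (hne : D ≠ univ) (hr : 0 < r) : ∃ z, D = Metric.ball z r := by
  obtain ⟨x, hx⟩ := (ne_univ_iff_exists_notMem D).1 hne
  obtain ⟨z, hz, -⟩ := hin.exists_subset_ball hD hconn hr hx
  refine ⟨z, hz.antisymm fun q hq => ?_⟩
  by_contra hqD
  obtain ⟨w, hw, hqw⟩ := hin.exists_subset_ball hD hconn hr hqD
  have hzw : z = w := hout.eq_of_subset_closedBall hconn.nonempty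
    (hz.trans Metric.ball_subset_closedBall) (hw.trans Metric.ball_subset_closedBall)
  exact hqw (hzw ▸ hq)

end Plane

section Indicator

variable {X : Type*} [TopologicalSpace X] {g : X → ℝ} {s : Set X} {x : X}

lemma isLocalMin_indicator_one_add (hg : ContinuousAt g x) (hx : x ∉ s)
    (hmin : IsLocalMinOn g sᶜ x) :
    IsLocalMin (fun y => s.indicator (fun _ => (1 : ℝ)) y + g y) x := by
  filter_upwards [hg.eventually (lt_mem_nhds (sub_one_lt (g x))),
    eventually_nhdsWithin_iff.1 hmin] with y hclose hle
  rw [indicator_of_notMem hx]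
  by_cases hy : y ∈ s
  · rw [indicator_of_mem hy]
    linarith
  · rw [indicator_of_notMem hy]
    exact add_le_add_right (hle hy) 0

lemma isLocalMax_indicator_one_add (hg : ContinuousAt g x) (hx : x ∈ s)
    (hmax : IsLocalMaxOn g s x) :
    IsLocalMax (fun y => s.indicator (fun _ => (1 : ℝ)) y + g y) x := by
  filter_upwards [hg.eventually (gt_mem_nhds (lt_add_one (g x))),
    eventually_nhdsWithin_iff.1 hmax] with y hclose hle
  rw [indicator_of_mem hx]
  by_cases hy : y ∈ s
  · rw [indicator_of_mem hy]
    exact add_le_add_right (hle hy) 1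
  · rw [indicator_of_notMem hy]
    linarith

end Indicator

section Paraboloid

variable {n : ℕ} {f : EuclideanSpace ℝ (Fin n) → ℝ} {O : Set (EuclideanSpace ℝ (Fin n))}

/-- The stationary test function `(y, t) ↦ -‖y - z‖ ^ 2`, whose superlevel sets are the balls
centred at `z`. -/
noncomputable def paraboloid (z : EuclideanSpace ℝ (Fin n)) : EuclideanSpace ℝ (Fin n) → ℝ → ℝ :=
  fun y _ => -‖y - z‖ ^ 2

variable (z x : EuclideanSpace ℝ (Fin n)) {t : ℝ}

lemma contDiff_paraboloid {k : WithTop ℕ∞} :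
    ContDiff ℝ k fun p : EuclideanSpace ℝ (Fin n) × ℝ => paraboloid z p.1 p.2 :=
  ((contDiff_fst.sub contDiff_const).norm_sq ℝ).neg

lemma sGrad_paraboloid : sGrad (paraboloid z) x t = (-2 : ℝ) • (x - z) := by
  refine HasGradientAt.gradient (hasGradientAt_iff_hasFDerivAt.2 ?_)
  refine ((hasFDerivAt_id x).sub_const z).norm_sq.neg.congr_fderiv ?_
  ext v
  simp

lemma sHess_paraboloid :
    sHess (paraboloid z) x t = (-2 : ℝ) • ContinuousLinearMap.id ℝ (EuclideanSpace ℝ (Fin n)) := by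
  have hgrad : gradient (fun y => paraboloid z y t) = fun y => (-2 : ℝ) • (y - z) :=
    funext fun y => sGrad_paraboloid z y
  rw [sHess, hgrad]
  exact (((hasFDerivAt_id x).sub_const z).const_smul (-2 : ℝ)).fderiv

lemma tDeriv_paraboloid : tDeriv (paraboloid z) x t = 0 := deriv_const t _

lemma trProj_smul_id (c : ℝ) (η : EuclideanSpace ℝ (Fin n)) :
    trProj (c • ContinuousLinearMap.id ℝ (EuclideanSpace ℝ (Fin n))) η = c * (n - ‖η‖ ^ 2) := by
  simp [trProj, clmTrace, LinearMap.trace_id, real_inner_smul_left, mul_sub]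

variable {z x}

lemma sGrad_paraboloid_ne_zero (hxz : x ≠ z) : sGrad (paraboloid z) x t ≠ 0 := by
  rw [sGrad_paraboloid]
  exact smul_ne_zero (by norm_num) (sub_ne_zero.2 hxz)

lemma levelSetOperator_paraboloid (hxz : x ≠ z) :
    tDeriv (paraboloid z) x t - (trProj (sHess (paraboloid z) x t)
      (‖sGrad (paraboloid z) x t‖⁻¹ • sGrad (paraboloid z) x t) + ‖sGrad (paraboloid z) x t‖) =
      2 * ((n - 1) - dist x z) := by
  have hgrad : ‖sGrad (paraboloid z) x t‖ ≠ 0 := norm_ne_zero_iff.2 (sGrad_paraboloid_ne_zero hxz)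
  rw [tDeriv_paraboloid, sHess_paraboloid, trProj_smul_id, norm_smul, norm_inv, norm_norm,
    inv_mul_cancel₀ hgrad, sGrad_paraboloid, norm_smul, norm_neg, Real.norm_ofNat, dist_eq_norm]
  ring

lemma ParabSupersol.le_of_isLocalMin {u : EuclideanSpace ℝ (Fin n) → ℝ → ℝ}
    (hu : ParabSupersol f O u) (hx : x ∈ O) (ht : 0 < t) (hxz : x ≠ z)
    (hmin : IsLocalMin (fun p : EuclideanSpace ℝ (Fin n) × ℝ => u p.1 p.2 - paraboloid z p.1 p.2)
      (x, t)) : f x ≤ 2 * ((n - 1) - dist x z) := by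
  rw [← levelSetOperator_paraboloid (t := t) hxz]
  exact (hu _ (contDiff_paraboloid z) x hx t ht hmin).1 (sGrad_paraboloid_ne_zero hxz)

lemma ParabSubsol.le_of_isLocalMax {u : EuclideanSpace ℝ (Fin n) → ℝ → ℝ}
    (hu : ParabSubsol f O u) (hx : x ∈ O) (ht : 0 < t)
    (hmax : IsLocalMax (fun p : EuclideanSpace ℝ (Fin n) × ℝ => u p.1 p.2 - paraboloid z p.1 p.2)
      (x, t)) : 2 * ((n - 1) - dist x z) ≤ f x := by
  obtain ⟨hreg, hcrit⟩ := hu _ (contDiff_paraboloid z) x hx t ht hmax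
  rcases eq_or_ne x z with rfl | hxz
  · obtain ⟨η, hη, h⟩ := hcrit (by rw [sGrad_paraboloid, sub_self, smul_zero])
    rw [tDeriv_paraboloid, sHess_paraboloid, trProj_smul_id] at h
    have hη2 : ‖η‖ ^ 2 ≤ 1 := pow_le_one₀ (norm_nonneg η) hη
    rw [dist_self]
    linarith
  · rw [← levelSetOperator_paraboloid (t := t) hxz]
    exact hreg (sGrad_paraboloid_ne_zero hxz)

end Paraboloid

theorem ParabSupersol.innerTouchingRadiusLE {n : ℕ} [NeZero n] {D : Set (EuclideanSpace ℝ (Fin n))}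
    (h : ParabSupersol (fun _ => 0) univ fun x _ => D.indicator (fun _ => (1 : ℝ)) x) :
    InnerTouchingRadiusLE D (n - 1) := by
  intro z x hx hmin
  rcases eq_or_ne x z with rfl | hxz
  · rw [dist_self, sub_nonneg]
    exact_mod_cast NeZero.one_le
  have hsq : IsLocalMinOn (fun y => ‖y - z‖ ^ 2) Dᶜ x := hmin.mono fun y hy =>
    pow_le_pow_left₀ (norm_nonneg _) (by simpa only [dist_eq_norm] using hy) 2
  have hstat := isLocalMin_indicator_one_add (by fun_prop) hx hsq
  have hlift := IsLocalMin.comp_continuous (g := Prod.fst) (b := (x, (1 : ℝ))) hstat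
    continuous_fst.continuousAt
  have := h.le_of_isLocalMin (mem_univ x) one_pos hxz (by
    simpa [paraboloid, Function.comp_def] using hlift)
  linarith

theorem ParabSubsol.outerTouchingRadiusGE {n : ℕ} {C : Set (EuclideanSpace ℝ (Fin n))}
    (h : ParabSubsol (fun _ => 0) univ fun x _ => C.indicator (fun _ => (1 : ℝ)) x) :
    OuterTouchingRadiusGE C (n - 1) := by
  intro z x hx hmax
  have hsq : IsLocalMaxOn (fun y => ‖y - z‖ ^ 2) C x := hmax.mono fun y hy =>
    pow_le_pow_left₀ (norm_nonneg _) (by simpa only [dist_eq_norm] using hy) 2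
  have hstat := isLocalMax_indicator_one_add (by fun_prop) hx hsq
  have hlift := IsLocalMax.comp_continuous (g := Prod.fst) (b := (x, (1 : ℝ))) hstat
    continuous_fst.continuousAt
  have := h.le_of_isLocalMax (mem_univ x) one_pos (by
    simpa [paraboloid, Function.comp_def] using hlift)
  linarith

/-- (Alexandrov in the viscosity sense, 2D.)  Let `D ⊊ ℝ²` be a
nonempty open connected set which is a stationary set-theoretic solution of
`-κ - 1 = 0` on `∂D`: the upper semicontinuous `(x,t) ↦ 𝟙_{cl(D)}(x)` is a viscosity
subsolution and the lower semicontinuous `(x,t) ↦ 𝟙_D(x)` is a viscosity supersolution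
of `u_t - (div(Du/|Du|)+1)|Du| = 0` in `ℝ² × (0,∞)`.  Then `D` is an open unit disk. -/
theorem stmt_19 (D : Set (EuclideanSpace ℝ (Fin 2))) (hDopen : IsOpen D)
    (hDconn : IsConnected D) (hDne : D ≠ Set.univ)
    (hsub : ParabSubsol (fun _ => 0) Set.univ
      (fun x _ => Set.indicator (closure D) (fun _ => (1 : ℝ)) x))
    (hsuper : ParabSupersol (fun _ => 0) Set.univ
      (fun x _ => Set.indicator D (fun _ => (1 : ℝ)) x)) :
    ∃ z : EuclideanSpace ℝ (Fin 2), D = Metric.ball z 1 := by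
  have : Fact (Module.finrank ℝ (EuclideanSpace ℝ (Fin 2)) = 2) := ⟨finrank_euclideanSpace_fin⟩
  have hradius : ((2 : ℕ) : ℝ) - 1 = 1 := by norm_num
  have hin : InnerTouchingRadiusLE D 1 := hradius ▸ hsuper.innerTouchingRadiusLE
  have hout : OuterTouchingRadiusGE (closure D) 1 := hradius ▸ hsub.outerTouchingRadiusGE
  exact hin.exists_eq_ball hout hDopen hDconn hDne one_pos
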